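/- (Hyperboloidal energy inequality) Let φ be a smooth solution of □_m φ = 0 on { t ≥ 2 } with initial data φ(2,·) = f ∈ H¹(ℝ^d), ∂_t φ(2,·) = g ∈ L²(ℝ^d), with f, g compactly supported in B(0,2). Then for every τ > √(inf over the support), the hyperboloidal energy E_m(φ,τ) = ∫_{Σ_τ} [ (1/(tτ)) Σᵢ (L^i φ)² + (τ/t)(∂_t φ)² + (t/τ) m² φ² ] dvol_τ satisfies E_m(φ,τ) ≤ ∫_{ℝ^d} g² + |∇f|² + m² f² dx. -/

import Mathlib

open MeasureTheory Real

noncomputable section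

/-- Spatial slice: ℝ^d as Euclidean space. -/
abbrev Spc (d : ℕ) := EuclideanSpace ℝ (Fin d)

/-- Time derivative ∂ₜ. -/
def dt {d : ℕ} (φ : ℝ × Spc d → ℝ) (p : ℝ × Spc d) : ℝ := fderiv ℝ φ p (1, 0)

/-- Spatial derivative ∂_{xⁱ}. -/
def dx {d : ℕ} (i : Fin d) (φ : ℝ × Spc d → ℝ) (p : ℝ × Spc d) : ℝ :=
  fderiv ℝ φ p (0, EuclideanSpace.single i 1)

/-- Lorentz boost Lⁱ = xⁱ ∂ₜ + t ∂_{xⁱ}. -/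
def boost {d : ℕ} (i : Fin d) (φ : ℝ × Spc d → ℝ) (p : ℝ × Spc d) : ℝ :=
  p.2 i * dt φ p + p.1 * dx i φ p

/-- Klein–Gordon operator □ₘ = -∂ₜₜ + Δ - m². -/
def box {d : ℕ} (m : ℝ) (φ : ℝ × Spc d → ℝ) (p : ℝ × Spc d) : ℝ :=
  -(dt (dt φ) p) + (∑ i, dx i (dx i φ) p) - m ^ 2 * φ p

/-- Spatial derivative for functions on ℝ^d. -/
def dxs {d : ℕ} (i : Fin d) (f : Spc d → ℝ) (x : Spc d) : ℝ :=
  fderiv ℝ f x (EuclideanSpace.single i 1)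

/-- Laplacian on ℝ^d. -/
def lap {d : ℕ} (f : Spc d → ℝ) (x : Spc d) : ℝ := ∑ i, dxs i (dxs i f) x

/-- The hyperboloidal energy E_m(φ, τ): the hyperboloid Σ_τ = {t² - |x|² = τ², t > 0}
is parametrized by x ↦ (√(τ² + |x|²), x), with induced volume form (τ/t)dx. -/
def energy {d : ℕ} (m τ : ℝ) (φ : ℝ × Spc d → ℝ) : ℝ :=
  ∫ x : Spc d,
    (fun t => (fun p : ℝ × Spc d =>
      ((1 / (t * τ)) * ∑ i, (boost i φ p) ^ 2 + (τ / t) * (dt φ p) ^ 2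
          + (t / τ) * m ^ 2 * (φ p) ^ 2) * (τ / t))
      (t, x)) (Real.sqrt (τ ^ 2 + ‖x‖ ^ 2))

/-!
On solutions of the Klein–Gordon equation the energy current
`J = (ρ, j) = ((∂ₜφ)² + |∇φ|² + m²φ², -2 ∂ₜφ ∇φ)` is divergence free, and by AM-GM it is future
causal (the dominant energy condition). Expanding the boosts shows that the hyperboloidal integrand,
including the volume factor `τ / t`, is the flux density `ρ - ∇h · j` of `J` through the graph of
`h x = √(τ² + |x|²)`, whose slope is at most `1`.

To compare the flux through the graph of `h` with the flux through `t = t₀`, interpolate by the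
graphs of `t₀ + s v` with `v = h - t₀ ≥ 0`: the `s`-derivative of the flux density is `v div J`
minus a spatial divergence, so for a spatially compactly supported current with `div J ≤ 0` the
flux decreases in `s`. A causal current is truncated by a cutoff which decreases along future
causal directions; this only lowers the divergence. The cutoff equals `1` on any given compact piece
of the graph, and the flux density is nonnegative, so monotone exhaustion gives both integrability
and the inequality, without finite speed of propagation.
-/

section Calculus

variable {d : ℕ} {k n : WithTop ℕ∞}

lemma contDiff_dt {u : ℝ × Spc d → ℝ} (hu : ContDiff ℝ n u) (hkn : k + 1 ≤ n) :
    ContDiff ℝ k (dt u) :=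
  (hu.fderiv_right hkn).clm_apply contDiff_const

lemma contDiff_dx {u : ℝ × Spc d → ℝ} (hu : ContDiff ℝ n u) (hkn : k + 1 ≤ n) (i : Fin d) :
    ContDiff ℝ k (dx i u) :=
  (hu.fderiv_right hkn).clm_apply contDiff_const

lemma dt_dx_comm {u : ℝ × Spc d → ℝ} (hu : ContDiff ℝ 2 u) (i : Fin d) (p : ℝ × Spc d) :
    dt (dx i u) p = dx i (dt u) p := by
  have hdiff : DifferentiableAt ℝ (fderiv ℝ u) p :=
    (hu.fderiv_right (m := 1) one_add_one_eq_two.le).differentiable one_ne_zero p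
  have hsecond (a b : ℝ × Spc d) :
      fderiv ℝ (fun q => fderiv ℝ u q a) p b = fderiv ℝ (fderiv ℝ u) p b a := by
    simp [fderiv_clm_apply hdiff (differentiableAt_const a)]
  have hsymm : IsSymmSndFDerivAt ℝ u p := hu.contDiffAt.isSymmSndFDerivAt (by simp)
  exact (hsecond _ _).trans ((hsymm _ _).trans (hsecond _ _).symm)

lemma sum_single_apply_mul (L : Spc d →L[ℝ] ℝ) (v : Spc d) :
    ∑ i, L (EuclideanSpace.single i 1) * v i = L v := by
  conv_rhs => rw [← (EuclideanSpace.basisFun (Fin d) ℝ).sum_repr v]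
  simp [mul_comm]

lemma fderiv_apply_eq_dt_add_sum_dx (u : ℝ × Spc d → ℝ) (p w : ℝ × Spc d) :
    fderiv ℝ u p w = dt u p * w.1 + ∑ i, dx i u p * w.2 i := by
  have hdx := sum_single_apply_mul ((fderiv ℝ u p).comp (.inr ℝ ℝ (Spc d))) w.2
  have hsplit : w = w.1 • (1, 0) + (0, w.2) := by ext <;> simp
  simp only [ContinuousLinearMap.comp_apply, ContinuousLinearMap.inr_apply] at hdx
  simp only [dt, dx, hdx]
  conv_lhs => rw [hsplit, map_add, map_smul, smul_eq_mul, mul_comm]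

lemma norm_fderiv_sq_eq_sum_dxs_sq (f : Spc d → ℝ) (x : Spc d) :
    ‖fderiv ℝ f x‖ ^ 2 = ∑ i, dxs i f x ^ 2 := by
  simp [dxs, (EuclideanSpace.basisFun (Fin d) ℝ).norm_dual (fderiv ℝ f x)]

lemma dx_eq_dxs_slice {u : ℝ × Spc d → ℝ} {t : ℝ} {x : Spc d} (hu : DifferentiableAt ℝ u (t, x))
    (i : Fin d) : dx i u (t, x) = dxs i (fun y => u (t, y)) x := by
  have h := hu.hasFDerivAt.comp x ((hasFDerivAt_const t x).prodMk (hasFDerivAt_id x))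
  simp only [dxs]
  rw [show (fun y => u (t, y)) = u ∘ fun y => (t, y) from rfl, h.fderiv]
  simp [dx]

end Calculus

section SpatialDivergence

variable {d : ℕ}

/-- The divergence of a vector field on `ℝ^d`. -/
def spatialDivergence (Y : Spc d → Spc d) (x : Spc d) : ℝ :=
  ∑ i, fderiv ℝ Y x (EuclideanSpace.single i 1) i

section CompactSupport

variable {E F : Type*} [NormedAddCommGroup E] [NormedSpace ℝ E] [MeasurableSpace E]
  [OpensMeasurableSpace E] [NormedAddCommGroup F] [NormedSpace ℝ F]

lemma integrable_fderiv_apply (μ : Measure E) [IsFiniteMeasureOnCompacts μ] {f : E → F}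
    (hf : ContDiff ℝ 1 f) (hc : HasCompactSupport f) (v : E) :
    Integrable (fun x => fderiv ℝ f x v) μ :=
  ((hf.continuous_fderiv one_ne_zero).clm_apply
    continuous_const).integrable_of_hasCompactSupport (hc.fderiv_apply ℝ v)

lemma integral_fderiv_apply_eq_zero [FiniteDimensional ℝ E] [BorelSpace E] (μ : Measure E)
    [μ.IsAddHaarMeasure] {f : E → F} (hf : ContDiff ℝ 1 f) (hc : HasCompactSupport f) (v : E) :
    ∫ x, fderiv ℝ f x v ∂μ = 0 := by
  simpa using integral_bilinear_fderiv_right_eq_neg_left_of_integrable (f := fun _ => (1 : ℝ))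
    (v := v) (B := ContinuousLinearMap.lsmul ℝ ℝ) (μ := μ) (by simp)
    (by simpa using integrable_fderiv_apply μ hf hc v)
    (by simpa using hf.continuous.integrable_of_hasCompactSupport hc)
    (by simp) (fun x _ => hf.differentiable one_ne_zero x)

end CompactSupport

variable {Y : Spc d → Spc d}

lemma integrable_spatialDivergence (hY : ContDiff ℝ 1 Y) (hc : HasCompactSupport Y) :
    Integrable (spatialDivergence Y) :=
  integrable_finsetSum _ fun i _ =>
    (EuclideanSpace.proj (𝕜 := ℝ) i).integrable_comp (integrable_fderiv_apply volume hY hc _)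

lemma integral_spatialDivergence_eq_zero (hY : ContDiff ℝ 1 Y) (hc : HasCompactSupport Y) :
    ∫ x, spatialDivergence Y x = 0 := by
  have hint (i : Fin d) : Integrable fun x => fderiv ℝ Y x (EuclideanSpace.single i 1) :=
    integrable_fderiv_apply volume hY hc _
  have hcomp (i : Fin d) : ∫ x, fderiv ℝ Y x (EuclideanSpace.single i 1) i = 0 := by
    simpa [integral_fderiv_apply_eq_zero volume hY hc] using
      (EuclideanSpace.proj (𝕜 := ℝ) i).integral_comp_comm (hint i)
  exact (integral_finsetSum _ fun i _ =>
    (EuclideanSpace.proj (𝕜 := ℝ) i).integrable_comp (hint i)).trans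
    (Finset.sum_eq_zero fun i _ => hcomp i)

end SpatialDivergence

section Homotopy

open Set

lemma eq_zero_of_hasDerivAt_of_forall_eq_zero {f : ℝ → ℝ} {c s : ℝ} (hf : ∀ s, f s = 0)
    (hderiv : HasDerivAt f c s) : c = 0 :=
  hderiv.unique (by simpa only [funext hf] using hasDerivAt_const s (0 : ℝ))

lemma integral_le_of_integral_deriv_nonpos {X : Type*} [TopologicalSpace X] [T2Space X]
    [SecondCountableTopology X] [MeasurableSpace X] [BorelSpace X] {μ : Measure X} [SFinite μ]
    [IsFiniteMeasureOnCompacts μ] {F F' : ℝ → X → ℝ} {K : Set X} (hK : IsCompact K)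
    (hF : ∀ s, ∀ x ∉ K, F s x = 0) (hderiv : ∀ s x, HasDerivAt (F · x) (F' s x) s)
    (hF' : Continuous (Function.uncurry F')) {a b : ℝ} (hab : a ≤ b)
    (hFa : Integrable (F a) μ) (hFb : Integrable (F b) μ)
    (hneg : ∀ s ∈ Icc a b, ∫ x, F' s x ∂μ ≤ 0) : ∫ x, F b x ∂μ ≤ ∫ x, F a x ∂μ := by
  have hF'K (s : ℝ) (x : X) (hx : x ∉ K) : F' s x = 0 :=
    eq_zero_of_hasDerivAt_of_forall_eq_zero (hF · x hx) (hderiv s x)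
  have hint : Integrable (Function.uncurry F')
      ((volume.restrict (uIoc a b)).prod (μ.restrict K)) := by
    rw [Measure.prod_restrict, uIoc_of_le hab]
    exact (hF'.continuousOn.integrableOn_compact (isCompact_Icc.prod hK)).mono_set
      (prod_mono Ioc_subset_Icc_self subset_rfl)
  have hftc (x : X) : ∫ s in a..b, F' s x = F b x - F a x :=
    intervalIntegral.integral_eq_sub_of_hasDerivAt (fun s _ => hderiv s x)
      ((hF'.comp (Continuous.prodMk_left x)).intervalIntegrable a b)
  rw [← sub_nonpos, ← integral_sub hFb hFa]
  calc ∫ x, (F b x - F a x) ∂μ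
      = ∫ x in K, (F b x - F a x) ∂μ :=
        (setIntegral_eq_integral_of_forall_compl_eq_zero fun x hx => by simp [hF _ x hx]).symm
    _ = ∫ s in a..b, ∫ x in K, F' s x ∂μ := by
        simp only [← hftc, intervalIntegral_integral_swap hint]
    _ = ∫ s in a..b, ∫ x, F' s x ∂μ := by
        simp only [setIntegral_eq_integral_of_forall_compl_eq_zero (hF'K _)]
    _ ≤ 0 := by
        rw [intervalIntegral.integral_of_le hab]
        exact setIntegral_nonpos measurableSet_Ioc fun s hs => hneg s (Ioc_subset_Icc_self hs)

end Homotopy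

section Current

open Set

variable {d : ℕ}

/-- The spacetime divergence of a current `J`, whose value at an event is the pair of its density
and its spatial flux vector. -/
def divergence (J : ℝ × Spc d → ℝ × Spc d) (p : ℝ × Spc d) : ℝ :=
  (fderiv ℝ J p (1, 0)).1 + ∑ i, (fderiv ℝ J p (0, EuclideanSpace.single i 1)).2 i

/-- The flux density of a current through the graph `t = h x`, with respect to `dx`. -/
def graphFlux (J : ℝ × Spc d → ℝ × Spc d) (h : Spc d → ℝ) (x : Spc d) : ℝ :=
  (J (h x, x)).1 - fderiv ℝ h x (J (h x, x)).2

variable {J : ℝ × Spc d → ℝ × Spc d} {h v : Spc d → ℝ} {t₀ : ℝ}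

lemma continuous_graphFlux (hJ : Continuous J) (hh : ContDiff ℝ 1 h) :
    Continuous (graphFlux J h) := by
  have := hh.continuous
  have := hh.continuous_fderiv one_ne_zero
  unfold graphFlux
  fun_prop

lemma graphFlux_const (x : Spc d) : graphFlux J (fun _ => t₀) x = (J (t₀, x)).1 := by
  simp [graphFlux]

lemma divergence_smul {χ : ℝ × Spc d → ℝ} {p : ℝ × Spc d} (hχ : DifferentiableAt ℝ χ p)
    (hJ : DifferentiableAt ℝ J p) :
    divergence (fun q => χ q • J q) p = χ p * divergence J p + fderiv ℝ χ p (J p) := by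
  rw [fderiv_apply_eq_dt_add_sum_dx]
  simp only [divergence, dt, dx, fderiv_fun_smul hχ hJ, add_apply,
    smul_apply, ContinuousLinearMap.smulRight_apply, Prod.fst_add, Prod.snd_add,
    Prod.smul_fst, Prod.smul_snd, PiLp.add_apply, PiLp.smul_apply, smul_eq_mul, mul_add,
    Finset.mul_sum, Finset.sum_add_distrib]
  ring

lemma graphFlux_smul (χ : ℝ × Spc d → ℝ) (x : Spc d) :
    graphFlux (fun q => χ q • J q) h x = χ (h x, x) * graphFlux J h x := by
  simp [graphFlux, mul_sub]

lemma graphFlux_nonneg (hJ : ∀ p, ‖(J p).2‖ ≤ (J p).1) {x : Spc d} (hh : ‖fderiv ℝ h x‖ ≤ 1) :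
    0 ≤ graphFlux J h x :=
  sub_nonneg.2 <| (le_abs_self _).trans <|
    ((fderiv ℝ h x).le_of_opNorm_le hh _).trans (by simpa using hJ _)

/-- The derivative in `s` of the flux density of `J` through the graph `t = t₀ + s * v x`. -/
def graphFluxDeriv (J : ℝ × Spc d → ℝ × Spc d) (v : Spc d → ℝ) (t₀ s : ℝ) (x : Spc d) : ℝ :=
  v x * (fderiv ℝ J (t₀ + s * v x, x) (1, 0)).1
    - fderiv ℝ v x ((J (t₀ + s * v x, x)).2
      + (s * v x) • (fderiv ℝ J (t₀ + s * v x, x) (1, 0)).2)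

lemma continuous_graphFluxDeriv (hJ : ContDiff ℝ 1 J) (hv : ContDiff ℝ 1 v) :
    Continuous (Function.uncurry (graphFluxDeriv J v t₀)) := by
  have := hv.continuous
  have := hJ.continuous
  have := hv.continuous_fderiv one_ne_zero
  have := hJ.continuous_fderiv one_ne_zero
  simp only [Function.uncurry_def, graphFluxDeriv]
  fun_prop

lemma hasDerivAt_graphFlux (hJ : Differentiable ℝ J) (hv : Differentiable ℝ v) (s : ℝ)
    (x : Spc d) :
    HasDerivAt (fun s => graphFlux J (fun y => t₀ + s * v y) x) (graphFluxDeriv J v t₀ s x) s := by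
  have hline : HasDerivAt (fun s : ℝ => ((t₀ + s * v x, x) : ℝ × Spc d)) (v x • (1, 0)) s := by
    simpa using! (((hasDerivAt_id s).mul_const (v x)).const_add t₀).prodMk (hasDerivAt_const s x)
  have hJline := (hJ (t₀ + s * v x, x)).hasFDerivAt.comp_hasDerivAt s hline
  rw [map_smul] at hJline
  have hfst := hasFDerivAt_fst.comp_hasDerivAt s hJline
  have hsnd := hasFDerivAt_snd.comp_hasDerivAt s hJline
  have hflux := hfst.sub
    ((hasDerivAt_id s).mul ((fderiv ℝ v x).hasFDerivAt.comp_hasDerivAt s hsnd))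
  convert! hflux using 1
  · ext s
    simp [graphFlux, fderiv_const_mul (hv x)]
  · simp only [graphFluxDeriv, map_add, map_smul, smul_eq_mul, ContinuousLinearMap.coe_fst',
      Function.comp_apply, one_mul, id_eq, ContinuousLinearMap.coe_snd']
    ring

lemma spatialDivergence_smul_graph (hJ : Differentiable ℝ J) (hv : Differentiable ℝ v) (s : ℝ)
    (x : Spc d) :
    spatialDivergence (fun y => v y • (J (t₀ + s * v y, y)).2) x
      = fderiv ℝ v x ((J (t₀ + s * v x, x)).2
          + (s * v x) • (fderiv ℝ J (t₀ + s * v x, x) (1, 0)).2)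
        + v x * ∑ i, (fderiv ℝ J (t₀ + s * v x, x) (0, EuclideanSpace.single i 1)).2 i := by
  have hgraph : HasFDerivAt (fun y : Spc d => ((t₀ + s * v y, y) : ℝ × Spc d))
      ((s • fderiv ℝ v x).prod (.id ℝ _)) x :=
    (((hv x).hasFDerivAt.const_mul s).const_add t₀).prodMk (hasFDerivAt_id x)
  have hJgraph : HasFDerivAt (fun y => (J (t₀ + s * v y, y)).2) _ x :=
    ((hJ (t₀ + s * v x, x)).hasFDerivAt.comp (f := fun y => (t₀ + s * v y, y)) x hgraph).snd
  have hcolumn (w : Spc d) : fderiv ℝ J (t₀ + s * v x, x) (s * fderiv ℝ v x w, w)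
      = (s * fderiv ℝ v x w) • fderiv ℝ J (t₀ + s * v x, x) (1, 0)
        + fderiv ℝ J (t₀ + s * v x, x) (0, w) := by
    rw [← map_smul, ← map_add]
    simp
  unfold spatialDivergence
  rw [((hv x).hasFDerivAt.fun_smul hJgraph).fderiv, map_add, ← sum_single_apply_mul,
    ← sum_single_apply_mul (fderiv ℝ v x) (_ • _), Finset.mul_sum, ← Finset.sum_add_distrib,
    ← Finset.sum_add_distrib]
  refine Finset.sum_congr rfl fun i _ => ?_
  simp only [add_apply, smul_apply, ContinuousLinearMap.comp_apply, ContinuousLinearMap.prod_apply,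
    ContinuousLinearMap.id_apply, ContinuousLinearMap.coe_snd', ContinuousLinearMap.smulRight_apply,
    hcolumn, smul_eq_mul, Prod.snd_add, Prod.smul_snd, PiLp.add_apply, PiLp.smul_apply]
  ring

lemma graphFluxDeriv_eq (hJ : Differentiable ℝ J) (hv : Differentiable ℝ v) (s : ℝ) (x : Spc d) :
    graphFluxDeriv J v t₀ s x = v x * divergence J (t₀ + s * v x, x)
      - spatialDivergence (fun y => v y • (J (t₀ + s * v y, y)).2) x := by
  rw [spatialDivergence_smul_graph hJ hv, graphFluxDeriv, divergence]
  ring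

lemma integral_graphFluxDeriv_nonpos (hJ : ContDiff ℝ 1 J) (hv : ContDiff ℝ 1 v)
    {K : Set (Spc d)} (hK : IsCompact K) (hJK : ∀ t, ∀ x ∉ K, J (t, x) = 0) {s : ℝ}
    (hdiv : ∀ x, v x * divergence J (t₀ + s * v x, x) ≤ 0) :
    ∫ x, graphFluxDeriv J v t₀ s x ≤ 0 := by
  have hJd := hJ.differentiable one_ne_zero
  have hvd := hv.differentiable one_ne_zero
  have hint : Integrable (graphFluxDeriv J v t₀ s) :=
    ((continuous_graphFluxDeriv hJ hv).comp (.prodMk_right s)).integrable_of_hasCompactSupport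
      (.intro hK fun x hx => eq_zero_of_hasDerivAt_of_forall_eq_zero
        (fun s => by simp [graphFlux, hJK _ x hx]) (hasDerivAt_graphFlux hJd hvd s x))
  have hY : ContDiff ℝ 1 fun y => v y • (J (t₀ + s * v y, y)).2 := by fun_prop
  have hYc : HasCompactSupport fun y => v y • (J (t₀ + s * v y, y)).2 :=
    .intro hK fun x hx => by simp [hJK _ x hx]
  calc ∫ x, graphFluxDeriv J v t₀ s x
      ≤ ∫ x, -spatialDivergence (fun y => v y • (J (t₀ + s * v y, y)).2) x :=
        integral_mono hint (integrable_spatialDivergence hY hYc).neg fun x => by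
          rw [graphFluxDeriv_eq hJd hvd]
          linarith [hdiv x]
    _ = 0 := by rw [integral_neg, integral_spatialDivergence_eq_zero hY hYc, neg_zero]

lemma integral_graphFlux_le_of_compactSupport (hJ : ContDiff ℝ 1 J) (hh : ContDiff ℝ 1 h)
    (ht₀ : ∀ x, t₀ ≤ h x) {K : Set (Spc d)} (hK : IsCompact K) (hJK : ∀ t, ∀ x ∉ K, J (t, x) = 0)
    (hdiv : ∀ p : ℝ × Spc d, p.1 ∈ Icc t₀ (h p.2) → divergence J p ≤ 0) :
    ∫ x, graphFlux J h x ≤ ∫ x, (J (t₀, x)).1 := by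
  set v : Spc d → ℝ := fun x => h x - t₀
  have hv : ContDiff ℝ 1 v := hh.sub contDiff_const
  have hv0 (x : Spc d) : 0 ≤ v x := sub_nonneg.2 (ht₀ x)
  have hflux (s : ℝ) : ∀ x ∉ K, graphFlux J (fun y => t₀ + s * v y) x = 0 := fun x hx => by
    simp [graphFlux, hJK _ x hx]
  have hint (s : ℝ) : Integrable (graphFlux J fun y => t₀ + s * v y) :=
    (continuous_graphFlux hJ.continuous (by fun_prop)).integrable_of_hasCompactSupport
      (.intro hK (hflux s))
  have hmono := integral_le_of_integral_deriv_nonpos hK hflux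
    (hasDerivAt_graphFlux (hJ.differentiable one_ne_zero) (hv.differentiable one_ne_zero))
    (continuous_graphFluxDeriv hJ hv) zero_le_one (hint 0) (hint 1) fun s hs =>
      integral_graphFluxDeriv_nonpos hJ hv hK hJK fun x =>
        mul_nonpos_of_nonneg_of_nonpos (hv0 x) <| hdiv _
          ⟨le_add_of_nonneg_right (mul_nonneg hs.1 (hv0 x)),
            by linarith [mul_le_of_le_one_left (hv0 x) hs.2, sub_add_cancel (h x) t₀]⟩
  simpa [v, graphFlux_const] using hmono

end Current

section Cutoff

variable {V : Type*} [NormedAddCommGroup V]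

/-- A smooth cutoff in spacetime, for truncating causal currents on `{t ≥ t₀}`: it does not increase
along future causal directions there. The exponential is a time function with derivative at least
`1` on `{t ≥ t₀}` which is bounded below, so that the cutoff vanishes for large `x` at all times. -/
def causalCutoff (t₀ R : ℝ) (p : ℝ × V) : ℝ :=
  smoothTransition (R + 1 - (exp (p.1 - t₀) + √(1 + ‖p.2‖ ^ 2)))

variable {t₀ R : ℝ}

lemma causalCutoff_nonneg (p : ℝ × V) : 0 ≤ causalCutoff t₀ R p := smoothTransition.nonneg _

lemma causalCutoff_le_one (p : ℝ × V) : causalCutoff t₀ R p ≤ 1 := smoothTransition.le_one _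

lemma causalCutoff_eq_zero (t : ℝ) {x : V} (hx : R + 1 ≤ ‖x‖) : causalCutoff t₀ R (t, x) = 0 := by
  have hsqrt : ‖x‖ ≤ √(1 + ‖x‖ ^ 2) := Real.le_sqrt_of_sq_le (by linarith)
  exact smoothTransition.zero_of_nonpos (by linarith [exp_pos (t - t₀)])

lemma causalCutoff_eq_one {p : ℝ × V} (hp : exp (p.1 - t₀) + √(1 + ‖p.2‖ ^ 2) ≤ R) :
    causalCutoff t₀ R p = 1 :=
  smoothTransition.one_of_one_le (by linarith)

lemma exists_causalCutoff_eqOn_one {S : Set (ℝ × V)} (hS : IsCompact S) (t₀ : ℝ) :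
    ∃ R, ∀ p ∈ S, causalCutoff t₀ R p = 1 := by
  obtain ⟨R, hR⟩ := hS.bddAbove_image
    (f := fun p : ℝ × V => exp (p.1 - t₀) + √(1 + ‖p.2‖ ^ 2)) (by fun_prop)
  exact ⟨R, fun p hp => causalCutoff_eq_one (hR (Set.mem_image_of_mem _ hp))⟩

variable [InnerProductSpace ℝ V]

lemma contDiff_sqrt_add_norm_sq {n : WithTop ℕ∞} {c : ℝ} (hc : 0 < c) :
    ContDiff ℝ n (fun x : V => √(c + ‖x‖ ^ 2)) :=
  (contDiff_const.add (contDiff_norm_sq ℝ)).sqrt fun x => by positivity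

lemma fderiv_sqrt_add_norm_sq {c : ℝ} (hc : 0 < c) (x : V) :
    fderiv ℝ (fun x : V => √(c + ‖x‖ ^ 2)) x = (√(c + ‖x‖ ^ 2))⁻¹ • innerSL ℝ x := by
  rw [((((hasStrictFDerivAt_norm_sq x).hasFDerivAt).const_add c).sqrt (by positivity)).fderiv]
  ext v
  simp only [one_div, mul_inv_rev, smul_apply, coe_innerSL_apply, nsmul_eq_mul, Nat.cast_ofNat,
    smul_eq_mul]
  field_simp

lemma norm_fderiv_sqrt_add_norm_sq_le_one {c : ℝ} (hc : 0 < c) (x : V) :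
    ‖fderiv ℝ (fun x : V => √(c + ‖x‖ ^ 2)) x‖ ≤ 1 := by
  rw [fderiv_sqrt_add_norm_sq hc, norm_smul, innerSL_apply_norm, norm_inv,
    Real.norm_of_nonneg (sqrt_nonneg _)]
  exact inv_mul_le_one_of_le₀ (Real.le_sqrt_of_sq_le (by linarith)) (sqrt_nonneg _)

lemma contDiff_causalCutoff {n : ℕ∞} : ContDiff ℝ n (causalCutoff t₀ R : ℝ × V → ℝ) :=
  smoothTransition.contDiff.comp (contDiff_const.sub ((contDiff_fst.sub contDiff_const).exp.add
    ((contDiff_sqrt_add_norm_sq one_pos).comp contDiff_snd)))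

lemma fderiv_causalCutoff_nonpos {p w : ℝ × V} (hp : t₀ ≤ p.1) (hw : ‖w.2‖ ≤ w.1) :
    fderiv ℝ (causalCutoff t₀ R) p w ≤ 0 := by
  have hsqrt : HasFDerivAt (fun x : V => √(1 + ‖x‖ ^ 2)) _ p.2 :=
    ((contDiff_sqrt_add_norm_sq (n := 1) one_pos).differentiable one_ne_zero p.2).hasFDerivAt
  have htime := ((hasFDerivAt_fst (𝕜 := ℝ) (p := p)).sub_const t₀).exp
  have hinner := (htime.add (hsqrt.comp p hasFDerivAt_snd)).const_sub (R + 1)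
  have hcutoff : HasFDerivAt (causalCutoff t₀ R) _ p :=
    ((smoothTransition.contDiff (n := 1)).differentiable one_ne_zero
      _).hasDerivAt.comp_hasFDerivAt p hinner
  have hspace : -w.1 ≤ fderiv ℝ (fun x : V => √(1 + ‖x‖ ^ 2)) p.2 w.2 :=
    neg_le_of_abs_le <| ((fderiv ℝ _ p.2).le_of_opNorm_le
      (norm_fderiv_sqrt_add_norm_sq_le_one one_pos p.2) w.2).trans (by simpa using hw)
  have hexp : w.1 ≤ exp (p.1 - t₀) * w.1 :=
    le_mul_of_one_le_left ((norm_nonneg _).trans hw) (one_le_exp (sub_nonneg.2 hp))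
  have htime_mono : 0 ≤ exp (p.1 - t₀) * w.1 + fderiv ℝ (fun x : V => √(1 + ‖x‖ ^ 2)) p.2 w.2 := by
    linarith
  rw [hcutoff.fderiv]
  exact mul_nonpos_of_nonneg_of_nonpos smoothTransition.monotone.deriv_nonneg
    (neg_nonpos.2 htime_mono)

end Cutoff

section CausalCurrent

open Set

variable {d : ℕ} {J : ℝ × Spc d → ℝ × Spc d} {h : Spc d → ℝ} {t₀ : ℝ}

lemma integral_graphFlux_cutoff_le (hJ : ContDiff ℝ 1 J) (hcausal : ∀ p, ‖(J p).2‖ ≤ (J p).1)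
    (hh : ContDiff ℝ 1 h) (ht₀ : ∀ x, t₀ ≤ h x)
    (hdiv : ∀ p : ℝ × Spc d, p.1 ∈ Icc t₀ (h p.2) → divergence J p ≤ 0) (R : ℝ) :
    ∫ x, causalCutoff t₀ R (h x, x) * graphFlux J h x
      ≤ ∫ x, causalCutoff t₀ R (t₀, x) * (J (t₀, x)).1 := by
  have hχ : ContDiff ℝ 1 (causalCutoff t₀ R : ℝ × Spc d → ℝ) := contDiff_causalCutoff
  simpa only [graphFlux_smul, Prod.smul_fst, smul_eq_mul] using
    integral_graphFlux_le_of_compactSupport (J := fun q => causalCutoff t₀ R q • J q)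
    (hχ.smul hJ) hh ht₀ (isCompact_closedBall (0 : Spc d) (R + 1))
    (fun t x hx => by
      have hx : R + 1 ≤ ‖x‖ := le_of_lt (by simpa using hx)
      simp [causalCutoff_eq_zero t hx])
    fun p hp => by
      rw [divergence_smul (hχ.differentiable one_ne_zero p) (hJ.differentiable one_ne_zero p)]
      exact add_nonpos (mul_nonpos_of_nonneg_of_nonpos (causalCutoff_nonneg p) (hdiv p hp))
        (fderiv_causalCutoff_nonpos hp.1 (hcausal p))

lemma setIntegral_graphFlux_le (hJ : ContDiff ℝ 1 J) (hcausal : ∀ p, ‖(J p).2‖ ≤ (J p).1)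
    (hh : ContDiff ℝ 1 h) (hspacelike : ∀ x, ‖fderiv ℝ h x‖ ≤ 1) (ht₀ : ∀ x, t₀ ≤ h x)
    (hdiv : ∀ p : ℝ × Spc d, p.1 ∈ Icc t₀ (h p.2) → divergence J p ≤ 0)
    (hint : Integrable fun x => (J (t₀, x)).1) {K : Set (Spc d)} (hK : IsCompact K) :
    ∫ x in K, graphFlux J h x ≤ ∫ x, (J (t₀, x)).1 := by
  obtain ⟨R, hR⟩ := exists_causalCutoff_eqOn_one
    (hK.image (f := fun x => (h x, x)) (by have := hh.continuous; fun_prop)) t₀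
  have hχ : Continuous (causalCutoff t₀ R : ℝ × Spc d → ℝ) :=
    (contDiff_causalCutoff (n := 0)).continuous
  have hdensity (p : ℝ × Spc d) : 0 ≤ (J p).1 := (norm_nonneg _).trans (hcausal p)
  have hcutoff_nonneg (x : Spc d) : 0 ≤ causalCutoff t₀ R (h x, x) * graphFlux J h x :=
    mul_nonneg (causalCutoff_nonneg _) (graphFlux_nonneg hcausal (hspacelike x))
  have hcutoff_int : Integrable fun x => causalCutoff t₀ R (h x, x) * graphFlux J h x := by
    refine Continuous.integrable_of_hasCompactSupport ?_
      (.intro (isCompact_closedBall (0 : Spc d) (R + 1)) fun x hx => ?_)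
    · exact (hχ.comp (hh.continuous.prodMk continuous_id)).mul
        (continuous_graphFlux hJ.continuous hh)
    · rw [causalCutoff_eq_zero _ (le_of_lt (by simpa using hx)), zero_mul]
  calc ∫ x in K, graphFlux J h x
      = ∫ x in K, causalCutoff t₀ R (h x, x) * graphFlux J h x :=
        setIntegral_congr_fun hK.measurableSet fun x hx => by
          simp [hR _ (mem_image_of_mem _ hx)]
    _ ≤ ∫ x, causalCutoff t₀ R (h x, x) * graphFlux J h x :=
        setIntegral_le_integral hcutoff_int (.of_forall hcutoff_nonneg)
    _ ≤ ∫ x, causalCutoff t₀ R (t₀, x) * (J (t₀, x)).1 :=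
        integral_graphFlux_cutoff_le hJ hcausal hh ht₀ hdiv R
    _ ≤ ∫ x, (J (t₀, x)).1 :=
        integral_mono_of_nonneg
          (.of_forall fun x => mul_nonneg (causalCutoff_nonneg _) (hdensity _)) hint
          (.of_forall fun x => mul_le_of_le_one_left (hdensity _) (causalCutoff_le_one _))

lemma integrable_and_integral_le_of_setIntegral_closedBall_le {E : Type*} [MetricSpace E]
    [ProperSpace E] [MeasurableSpace E] [OpensMeasurableSpace E] {μ : Measure E}
    [IsFiniteMeasureOnCompacts μ]
    {f : E → ℝ} (hf : Continuous f) (hf0 : ∀ x, 0 ≤ f x) (x₀ : E) {C : ℝ}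
    (hC : ∀ r, ∫ x in Metric.closedBall x₀ r, f x ∂μ ≤ C) : Integrable f μ ∧ ∫ x, f x ∂μ ≤ C := by
  have hcover : AECover μ Filter.atTop (fun n : ℕ => Metric.closedBall x₀ n) :=
    aecover_closedBall tendsto_natCast_atTop_atTop
  have hint : Integrable f μ := hcover.integrable_of_integral_bounded_of_nonneg_ae C
    (fun n => hf.continuousOn.integrableOn_compact (isCompact_closedBall x₀ _)) (.of_forall hf0)
    (.of_forall fun n => hC n)
  exact ⟨hint, le_of_tendsto' (hcover.integral_tendsto_of_countably_generated hint) fun n => hC n⟩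

theorem integrable_graphFlux_and_integral_le (hJ : ContDiff ℝ 1 J)
    (hcausal : ∀ p, ‖(J p).2‖ ≤ (J p).1) (hh : ContDiff ℝ 1 h)
    (hspacelike : ∀ x, ‖fderiv ℝ h x‖ ≤ 1) (ht₀ : ∀ x, t₀ ≤ h x)
    (hdiv : ∀ p : ℝ × Spc d, p.1 ∈ Icc t₀ (h p.2) → divergence J p ≤ 0)
    (hint : Integrable fun x => (J (t₀, x)).1) :
    Integrable (graphFlux J h) ∧ ∫ x, graphFlux J h x ≤ ∫ x, (J (t₀, x)).1 :=
  integrable_and_integral_le_of_setIntegral_closedBall_le (continuous_graphFlux hJ.continuous hh)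
    (fun x => graphFlux_nonneg hcausal (hspacelike x)) 0 fun r =>
    setIntegral_graphFlux_le hJ hcausal hh hspacelike ht₀ hdiv hint (isCompact_closedBall 0 r)

end CausalCurrent

section KleinGordon

variable {d : ℕ} {m : ℝ} {φ : ℝ × Spc d → ℝ}

lemma divergence_eq_dt_add_sum_dx {J : ℝ × Spc d → ℝ × Spc d} {p : ℝ × Spc d}
    (hJ : DifferentiableAt ℝ J p) :
    divergence J p = dt (fun q => (J q).1) p + ∑ i, dx i (fun q => (J q).2 i) p := by
  have hcomp (i : Fin d) : HasFDerivAt (fun q => (J q).2 i) _ p :=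
    (EuclideanSpace.proj (𝕜 := ℝ) i).hasFDerivAt.comp p hJ.hasFDerivAt.snd
  simp [divergence, dt, dx, fun i => (hcomp i).fderiv, hJ.hasFDerivAt.fst.fderiv]

/-- The spatial gradient `∇φ` at an event. -/
def spatialGradient (φ : ℝ × Spc d → ℝ) (p : ℝ × Spc d) : Spc d :=
  WithLp.toLp 2 fun i => dx i φ p

lemma norm_spatialGradient_sq (φ : ℝ × Spc d → ℝ) (p : ℝ × Spc d) :
    ‖spatialGradient φ p‖ ^ 2 = ∑ i, dx i φ p ^ 2 :=
  EuclideanSpace.real_norm_sq_eq _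

/-- The energy density `(∂ₜφ)² + |∇φ|² + m²φ²`, without the customary factor `1/2`. -/
def energyDensity (m : ℝ) (φ : ℝ × Spc d → ℝ) (p : ℝ × Spc d) : ℝ :=
  dt φ p ^ 2 + ‖spatialGradient φ p‖ ^ 2 + m ^ 2 * φ p ^ 2

/-- The Noether current of time translations for the Klein–Gordon equation, normalized so that its
density is `energyDensity`. -/
def energyCurrent (m : ℝ) (φ : ℝ × Spc d → ℝ) (p : ℝ × Spc d) : ℝ × Spc d :=
  (energyDensity m φ p, (-2 * dt φ p) • spatialGradient φ p)

lemma contDiff_energyCurrent (hφ : ContDiff ℝ 2 φ) : ContDiff ℝ 1 (energyCurrent m φ) := by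
  have hφ1 : ContDiff ℝ 1 φ := hφ.of_le one_le_two
  have hdt := contDiff_dt hφ one_add_one_eq_two.le
  have hgrad : ContDiff ℝ 1 (spatialGradient φ) :=
    contDiff_euclidean.2 (contDiff_dx hφ one_add_one_eq_two.le)
  exact (((hdt.pow 2).add (hgrad.norm_sq ℝ)).add (contDiff_const.mul (hφ1.pow 2))).prodMk
    ((contDiff_const.mul hdt).smul hgrad)

lemma norm_energyCurrent_snd_le (m : ℝ) (φ : ℝ × Spc d → ℝ) (p : ℝ × Spc d) :
    ‖(energyCurrent m φ p).2‖ ≤ (energyCurrent m φ p).1 := by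
  have hamgm := two_mul_le_add_sq |dt φ p| ‖spatialGradient φ p‖
  have hmass : 0 ≤ m ^ 2 * φ p ^ 2 := by positivity
  rw [sq_abs] at hamgm
  simp only [energyCurrent, energyDensity, norm_smul, Real.norm_eq_abs, abs_mul, abs_neg,
    Nat.abs_ofNat]
  linarith

lemma dt_energyDensity (hφ : ContDiff ℝ 2 φ) (p : ℝ × Spc d) :
    dt (energyDensity m φ) p = 2 * (dt φ p * dt (dt φ) p + ∑ i, dx i φ p * dx i (dt φ) p
      + m ^ 2 * φ p * dt φ p) := by
  have hd := (hφ.differentiable two_ne_zero p).hasFDerivAt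
  have hdt := ((contDiff_dt hφ one_add_one_eq_two.le).differentiable one_ne_zero p).hasFDerivAt
  have hdx (i : Fin d) :=
    ((contDiff_dx hφ one_add_one_eq_two.le i).differentiable one_ne_zero p).hasFDerivAt
  have hsum : HasFDerivAt (fun q => dt φ q ^ 2 + ∑ i, dx i φ q ^ 2 + m ^ 2 * φ q ^ 2) _ p :=
    ((hdt.pow 2).add (HasFDerivAt.fun_sum (u := Finset.univ) fun i _ => (hdx i).pow 2)).add
      ((hd.pow 2).const_mul (m ^ 2))
  have hdensity : energyDensity m φ
      = fun q => dt φ q ^ 2 + ∑ i, dx i φ q ^ 2 + m ^ 2 * φ q ^ 2 := by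
    funext q
    rw [energyDensity, norm_spatialGradient_sq]
  simp only [← dt_dx_comm hφ]
  rw [dt, hdensity, hsum.fderiv]
  simp [dt, mul_add, Finset.mul_sum, mul_assoc, mul_left_comm]

lemma dx_energyCurrent_snd (hφ : ContDiff ℝ 2 φ) (i : Fin d) (p : ℝ × Spc d) :
    dx i (fun q => (energyCurrent m φ q).2 i) p
      = -2 * (dt φ p * dx i (dx i φ) p + dx i φ p * dx i (dt φ) p) := by
  have hdt := ((contDiff_dt hφ one_add_one_eq_two.le).differentiable one_ne_zero p).hasFDerivAt
  have hdx := ((contDiff_dx hφ one_add_one_eq_two.le i).differentiable one_ne_zero p).hasFDerivAt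
  have hcomponent : (fun q => (energyCurrent m φ q).2 i) = fun q => -2 * dt φ q * dx i φ q := rfl
  have hproduct : HasFDerivAt (fun q => -2 * dt φ q * dx i φ q) _ p := (hdt.const_mul (-2)).mul hdx
  rw [hcomponent, dx, hproduct.fderiv]
  simp only [dx, add_apply, smul_apply, smul_eq_mul]
  ring

lemma divergence_energyCurrent (hφ : ContDiff ℝ 2 φ) (p : ℝ × Spc d) :
    divergence (energyCurrent m φ) p = -2 * dt φ p * box m φ p := by
  have hdensity : (fun q => (energyCurrent m φ q).1) = energyDensity m φ := rfl
  rw [divergence_eq_dt_add_sum_dx ((contDiff_energyCurrent hφ).differentiable one_ne_zero p),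
    hdensity, dt_energyDensity hφ]
  simp only [dx_energyCurrent_snd hφ, box, mul_add, Finset.sum_add_distrib, ← Finset.mul_sum]
  ring

/-- The integrand of `energy m τ φ`. -/
def hyperboloidalDensity (m τ : ℝ) (φ : ℝ × Spc d → ℝ) (x : Spc d) : ℝ :=
  let t := √(τ ^ 2 + ‖x‖ ^ 2)
  ((1 / (t * τ)) * ∑ i, boost i φ (t, x) ^ 2 + (τ / t) * dt φ (t, x) ^ 2
    + (t / τ) * m ^ 2 * φ (t, x) ^ 2) * (τ / t)

lemma sum_boost_sq (φ : ℝ × Spc d → ℝ) (p : ℝ × Spc d) :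
    ∑ i, boost i φ p ^ 2 = dt φ p ^ 2 * ‖p.2‖ ^ 2
      + 2 * (p.1 * dt φ p * inner ℝ p.2 (spatialGradient φ p))
      + p.1 ^ 2 * ‖spatialGradient φ p‖ ^ 2 := by
  have hboost : ∑ i, boost i φ p ^ 2 = ‖dt φ p • p.2 + p.1 • spatialGradient φ p‖ ^ 2 := by
    simp [EuclideanSpace.real_norm_sq_eq, boost, spatialGradient, mul_comm]
  rw [hboost, norm_add_sq_real, norm_smul, norm_smul, mul_pow, mul_pow, real_inner_smul_left,
    real_inner_smul_right, Real.norm_eq_abs, Real.norm_eq_abs, sq_abs, sq_abs]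
  ring

lemma hyperboloidalDensity_eq_graphFlux (m : ℝ) {τ : ℝ} (hτ : 0 < τ) (φ : ℝ × Spc d → ℝ) :
    hyperboloidalDensity m τ φ
      = graphFlux (energyCurrent m φ) (fun x => √(τ ^ 2 + ‖x‖ ^ 2)) := by
  funext x
  have hpos : 0 < τ ^ 2 + ‖x‖ ^ 2 := by positivity
  simp only [hyperboloidalDensity, graphFlux, fderiv_sqrt_add_norm_sq (pow_pos hτ 2)]
  set t := √(τ ^ 2 + ‖x‖ ^ 2)
  have ht : 0 < t := sqrt_pos.2 hpos
  have htx : ‖x‖ ^ 2 = t ^ 2 - τ ^ 2 := by rw [sq_sqrt hpos.le]; ring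
  simp only [sum_boost_sq, htx, energyCurrent, energyDensity, smul_apply,
    innerSL_apply_apply, real_inner_smul_right, smul_eq_mul]
  field_simp
  ring

lemma energyDensity_eq_of_data {t₀ : ℝ} (hφ : Differentiable ℝ φ) {f g : Spc d → ℝ}
    (hf : ∀ x, φ (t₀, x) = f x) (hg : ∀ x, dt φ (t₀, x) = g x) (x : Spc d) :
    energyDensity m φ (t₀, x) = g x ^ 2 + ‖fderiv ℝ f x‖ ^ 2 + m ^ 2 * f x ^ 2 := by
  simp only [energyDensity, norm_spatialGradient_sq, dx_eq_dxs_slice (hφ _), hf, hg,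
    norm_fderiv_sq_eq_sum_dxs_sq]

lemma integrable_energyDensity_data (m : ℝ) {f g : Spc d → ℝ} (hf : ContDiff ℝ 1 f)
    (hg : Continuous g) (hfc : HasCompactSupport f) (hgc : HasCompactSupport g) :
    Integrable fun x => g x ^ 2 + ‖fderiv ℝ f x‖ ^ 2 + m ^ 2 * f x ^ 2 := by
  have := hf.continuous_fderiv one_ne_zero
  refine Continuous.integrable_of_hasCompactSupport (by fun_prop) (.add (.add ?_ ?_) ?_)
  · exact hgc.comp_left (g := (· ^ 2)) (by simp)
  · exact (hfc.fderiv ℝ).comp_left (g := (‖·‖ ^ 2)) (by simp)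
  · exact hfc.comp_left (g := (m ^ 2 * · ^ 2)) (by simp)

lemma hasCompactSupport_of_tsupport_subset_ball {X M : Type*} [PseudoMetricSpace X] [ProperSpace X]
    [Zero M] {f : X → M} {x : X} {r : ℝ} (h : tsupport f ⊆ Metric.ball x r) :
    HasCompactSupport f :=
  (isCompact_closedBall x r).of_isClosed_subset (isClosed_tsupport f)
    (h.trans Metric.ball_subset_closedBall)

end KleinGordon

theorem hyperboloidal_energy_inequality_general {d : ℕ} (m : ℝ) {φ : ℝ × Spc d → ℝ}
    (hφ : ContDiff ℝ 2 φ) {t₀ τ : ℝ} (hτ : 0 < τ) (ht₀ : t₀ ≤ τ)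
    (hsol : ∀ p : ℝ × Spc d, p.1 ∈ Set.Icc t₀ (√(τ ^ 2 + ‖p.2‖ ^ 2)) → box m φ p = 0)
    {f g : Spc d → ℝ} (hf : ∀ x, φ (t₀, x) = f x) (hg : ∀ x, dt φ (t₀, x) = g x)
    (hfinite : Integrable fun x => g x ^ 2 + ‖fderiv ℝ f x‖ ^ 2 + m ^ 2 * f x ^ 2) :
    Integrable (hyperboloidalDensity m τ φ) ∧
      energy m τ φ ≤ ∫ x, g x ^ 2 + ‖fderiv ℝ f x‖ ^ 2 + m ^ 2 * f x ^ 2 := by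
  have hdata := energyDensity_eq_of_data (m := m) (hφ.differentiable two_ne_zero) hf hg
  have hinitial : Integrable fun x => (energyCurrent m φ (t₀, x)).1 :=
    hfinite.congr (.of_forall fun x => (hdata x).symm)
  have hτ2 : 0 < τ ^ 2 := by positivity
  have hflux := integrable_graphFlux_and_integral_le (t₀ := t₀)
    (contDiff_energyCurrent (m := m) hφ) (norm_energyCurrent_snd_le m φ)
    (contDiff_sqrt_add_norm_sq hτ2) (norm_fderiv_sqrt_add_norm_sq_le_one hτ2)
    (fun x => ht₀.trans (Real.le_sqrt_of_sq_le (le_add_of_nonneg_right (sq_nonneg ‖x‖))))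
    (fun p hp => by rw [divergence_energyCurrent hφ, hsol p hp, mul_zero]) hinitial
  rw [← hyperboloidalDensity_eq_graphFlux m hτ φ] at hflux
  exact ⟨hflux.1, hflux.2.trans_eq (integral_congr_ae (.of_forall hdata))⟩

/-- hyperboloidal energy inequality: for compactly supported data at
t = 2, the hyperboloidal energy is bounded by the initial energy. -/
theorem hyperboloidal_energy_inequality {d : ℕ} (hd : 1 ≤ d) (m : ℝ) (hm : 0 ≤ m)
    (φ : ℝ × Spc d → ℝ) (hφ : ContDiff ℝ (⊤ : ℕ∞) φ)
    (hsol : ∀ p : ℝ × Spc d, 2 ≤ p.1 → box m φ p = 0)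
    (f g : Spc d → ℝ) (hf : ∀ x, φ (2, x) = f x) (hg : ∀ x, dt φ (2, x) = g x)
    (hfs : ContDiff ℝ (⊤ : ℕ∞) f) (hgs : ContDiff ℝ (⊤ : ℕ∞) g)
    (hfsupp : tsupport f ⊆ Metric.ball 0 2) (hgsupp : tsupport g ⊆ Metric.ball 0 2) :
    ∀ τ : ℝ, 2 ≤ τ →
      energy m τ φ ≤ ∫ x : Spc d, (g x) ^ 2 + ‖fderiv ℝ f x‖ ^ 2 + m ^ 2 * (f x) ^ 2 := fun _ hτ =>
  (hyperboloidal_energy_inequality_general m (contDiff_infty.1 hφ 2) (by linarith) hτ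
    (fun p hp => hsol p hp.1) hf hg (integrable_energyDensity_data m (contDiff_infty.1 hfs 1)
      hgs.continuous (hasCompactSupport_of_tsupport_subset_ball hfsupp)
      (hasCompactSupport_of_tsupport_subset_ball hgsupp))).2
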